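/- arXiv:2008.05197 — 3 statements merged into one kernel-verified Lean document; each statement's English description precedes it below -/
import Mathlib

section
/- There exists a group homomorphism μ : Γ → Sym(G/H) into the group of permutations of the left coset space G/H satisfying μ_γ(g·(xH)) = ρ_γ(g)·μ_γ(xH) for all γ ∈ Γ, g ∈ G and xH ∈ G/H, if and only if there exists a map t : Γ → G satisfying conditions (i)–(ii) for (ρ, H). Moreover, when such a t exists, the formula μ_γ(gH) := ρ_γ(g) t_γ H is well defined and gives such a homomorphism μ. -/
/-- A map `t : Γ → G` satisfies conditions (i)–(ii) for `(ρ, H)` if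
(i) `ρ γ (H) = t γ * H * (t γ)⁻¹` for all `γ`, and
(ii) `t (γ₁ * γ₂) ∈ ρ γ₁ (t γ₂) * t γ₁ * H` for all `γ₁ γ₂`. -/
def SatisfiesConditions {Γ G : Type*} [Group Γ] [Group G] (ρ : Γ →* MulAut G)
    (H : Subgroup G) (t : Γ → G) : Prop :=
  (∀ γ : Γ, H.map (MulEquiv.toMonoidHom (ρ γ)) =
      H.map (MulEquiv.toMonoidHom (MulAut.conj (t γ)))) ∧
  (∀ γ₁ γ₂ : Γ, ((ρ γ₁) (t γ₂) * t γ₁)⁻¹ * t (γ₁ * γ₂) ∈ H)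

/-!
An equivariant permutation is determined by the image `t γ H` of the base coset `H`. Since `ρ γ` is
an automorphism, `gH ↦ ρ γ (g) * t γ * H` is a well-defined permutation of `G ⧸ H` exactly when
`ρ γ` carries `H` onto the stabilizer `t γ * H * (t γ)⁻¹` of the coset `t γ H`, which is
condition (i). Comparing the images of `H` under `μ (γ₁ * γ₂)` and `μ γ₁ * μ γ₂` turns
multiplicativity into condition (ii).
-/

theorem forall_smul_iff_exists_forall_mk {G G' F : Type*} [Group G] [Group G'] [FunLike F G G']
    [MonoidHomClass F G G'] {H : Subgroup G} {K : Subgroup G'} {φ : F} {f : G ⧸ H → G' ⧸ K} :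
    (∀ (g : G) (x : G ⧸ H), f (g • x) = φ g • f x) ↔
      ∃ t : G', ∀ g : G, f g = (φ g * t : G') := by
  constructor
  · intro hf
    obtain ⟨t, ht⟩ := QuotientGroup.mk_surjective (f (1 : G))
    refine ⟨t, fun g => ?_⟩
    calc f g = f (g • ((1 : G) : G ⧸ H)) := by
          rw [MulAction.Quotient.smul_coe, smul_eq_mul, mul_one]
      _ = φ g • (t : G' ⧸ K) := by rw [hf, ht]
  · rintro ⟨t, ht⟩ g x
    induction x using QuotientGroup.induction_on with
    | H a => simp only [MulAction.Quotient.smul_coe, smul_eq_mul, ht, map_mul, mul_assoc]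

section CosetEquiv

variable {G G' : Type*} [Group G] [Group G'] {H : Subgroup G} {K : Subgroup G'} {φ : G ≃* G'}
  {t : G'}

theorem map_eq_map_conj_iff :
    H.map φ.toMonoidHom = K.map (MulAut.conj t).toMonoidHom ↔
      ∀ h, h ∈ H ↔ t⁻¹ * φ h * t ∈ K := by
  rw [SetLike.ext_iff, ← φ.toEquiv.forall_congr_right]
  simp only [Subgroup.mem_map_equiv, MulEquiv.toEquiv_eq_coe, MulEquiv.coe_toEquiv,
    MulEquiv.symm_apply_apply, MulAut.conj_symm_apply]

/-- The bijection `gH ↦ φ(g) t K` of left coset spaces induced by a group isomorphism `φ` with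
`φ(H) = t K t⁻¹`; it is the `φ`-equivariant bijection sending the coset `H` to `t K`. -/
def cosetEquiv (φ : G ≃* G') (t : G')
    (hφ : H.map φ.toMonoidHom = K.map (MulAut.conj t).toMonoidHom) : G ⧸ H ≃ G' ⧸ K :=
  Quotient.congr (φ.toEquiv.trans (Equiv.mulRight t)) fun a b => by
    change QuotientGroup.leftRel H a b ↔ QuotientGroup.leftRel K (φ a * t) (φ b * t)
    simp only [QuotientGroup.leftRel_apply, map_eq_map_conj_iff.mp hφ (a⁻¹ * b), map_mul, map_inv,
      mul_inv_rev, mul_assoc]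

@[simp]
theorem cosetEquiv_mk (hφ : H.map φ.toMonoidHom = K.map (MulAut.conj t).toMonoidHom) (g : G) :
    cosetEquiv φ t hφ g = (φ g * t : G') :=
  rfl

theorem map_eq_map_conj_of_injective {f : G ⧸ H → G' ⧸ K} (hf : Function.Injective f)
    (hft : ∀ g : G, f g = (φ g * t : G')) :
    H.map φ.toMonoidHom = K.map (MulAut.conj t).toMonoidHom := by
  refine map_eq_map_conj_iff.mpr fun h => ?_
  calc h ∈ H
      ↔ ((1 : G) : G ⧸ H) = h := by simp [QuotientGroup.eq]
    _ ↔ f (1 : G) = f h := hf.eq_iff.symm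
    _ ↔ t⁻¹ * φ h * t ∈ K := by simp [hft, QuotientGroup.eq, mul_assoc]

end CosetEquiv

section Descent

variable {Γ G : Type*} [Monoid Γ] [Group G] {ρ : Γ →* MulAut G} {H : Subgroup G} {t : Γ → G}

/-- The map `t` is a descent datum for `(ρ, H)`: conditions (i)–(ii) of `SatisfiesConditions`, for a
monoid `Γ` instead of a group. -/
structure IsDescentDatum (ρ : Γ →* MulAut G) (H : Subgroup G) (t : Γ → G) : Prop where
  map_eq_map_conj (γ : Γ) : H.map (ρ γ).toMonoidHom = H.map (MulAut.conj (t γ)).toMonoidHom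
  mul_mem (γ₁ γ₂ : Γ) : (ρ γ₁ (t γ₂) * t γ₁)⁻¹ * t (γ₁ * γ₂) ∈ H

theorem satisfiesConditions_iff_isDescentDatum {Γ : Type*} [Group Γ] {ρ : Γ →* MulAut G}
    {t : Γ → G} : SatisfiesConditions ρ H t ↔ IsDescentDatum ρ H t :=
  ⟨fun h => ⟨h.1, h.2⟩, fun h => ⟨h.1, h.2⟩⟩

namespace IsDescentDatum

/-- The homomorphism `μ` attached to a descent datum `t`, given by
`μ γ (gH) = ρ γ (g) * t γ * H`. -/
def toPermHom (ht : IsDescentDatum ρ H t) : Γ →* Equiv.Perm (G ⧸ H) :=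
  MonoidHom.mk' (fun γ => cosetEquiv (ρ γ) (t γ) (ht.map_eq_map_conj γ)) fun γ₁ γ₂ => by
    ext x
    induction x using QuotientGroup.induction_on with
    | H g =>
      simp only [Equiv.Perm.mul_apply, cosetEquiv_mk]
      refine (QuotientGroup.eq.mpr ?_).symm
      simpa [mul_assoc] using ht.mul_mem γ₁ γ₂

@[simp]
theorem toPermHom_mk (ht : IsDescentDatum ρ H t) (γ : Γ) (g : G) :
    ht.toPermHom γ g = (ρ γ g * t γ : G) :=
  cosetEquiv_mk (ht.map_eq_map_conj γ) g

theorem toPermHom_smul (ht : IsDescentDatum ρ H t) (γ : Γ) (g : G) (x : G ⧸ H) :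
    ht.toPermHom γ (g • x) = ρ γ g • ht.toPermHom γ x :=
  forall_smul_iff_exists_forall_mk.mpr ⟨t γ, ht.toPermHom_mk γ⟩ g x

end IsDescentDatum

theorem isDescentDatum_of_forall_mk {μ : Γ →* Equiv.Perm (G ⧸ H)}
    (hμ : ∀ (γ : Γ) (g : G), μ γ g = (ρ γ g * t γ : G)) : IsDescentDatum ρ H t where
  map_eq_map_conj γ := map_eq_map_conj_of_injective (μ γ).injective (hμ γ)
  mul_mem γ₁ γ₂ := by
    have hμt (γ : Γ) : μ γ (1 : G) = (t γ : G ⧸ H) := by simp [hμ]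
    refine QuotientGroup.eq.mp ?_
    calc ((ρ γ₁ (t γ₂) * t γ₁ : G) : G ⧸ H)
        = μ γ₁ (μ γ₂ (1 : G)) := by rw [hμt, hμ]
      _ = t (γ₁ * γ₂) := by rw [← Equiv.Perm.mul_apply, ← map_mul, hμt]

end Descent

theorem stmt2_general {Γ G : Type*} [Monoid Γ] [Group G] (ρ : Γ →* MulAut G) (H : Subgroup G) :
    ((∃ μ : Γ →* Equiv.Perm (G ⧸ H),
        ∀ (γ : Γ) (g : G) (x : G ⧸ H), μ γ (g • x) = (ρ γ) g • μ γ x) ↔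
      ∃ t : Γ → G, IsDescentDatum ρ H t) ∧
    ∀ t : Γ → G, IsDescentDatum ρ H t →
      ∃ μ : Γ →* Equiv.Perm (G ⧸ H),
        (∀ (γ : Γ) (g : G) (x : G ⧸ H), μ γ (g • x) = (ρ γ) g • μ γ x) ∧
        ∀ (γ : Γ) (g : G),
          μ γ (QuotientGroup.mk g) = QuotientGroup.mk ((ρ γ) g * t γ) := by
  refine ⟨⟨?_, fun ⟨_, ht⟩ => ⟨ht.toPermHom, ht.toPermHom_smul⟩⟩,
    fun _ ht => ⟨ht.toPermHom, ht.toPermHom_smul, ht.toPermHom_mk⟩⟩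
  rintro ⟨μ, hμ⟩
  choose t ht using fun γ => forall_smul_iff_exists_forall_mk.mp (hμ γ)
  exact ⟨t, isDescentDatum_of_forall_mk ht⟩

/-- There exists a group homomorphism `μ : Γ → Sym(G/H)` satisfying
`μ γ (g • xH) = ρ γ (g) • μ γ (xH)` if and only if there exists a map `t : Γ → G` satisfying
conditions (i)–(ii) for `(ρ, H)`; moreover, when such a `t` exists, the formula
`μ γ (gH) = ρ γ (g) * t γ * H` is well defined and gives such a homomorphism. -/
theorem stmt2 {Γ G : Type*} [Group Γ] [Group G] (ρ : Γ →* MulAut G) (H : Subgroup G) :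
    ((∃ μ : Γ →* Equiv.Perm (G ⧸ H),
        ∀ (γ : Γ) (g : G) (x : G ⧸ H), μ γ (g • x) = (ρ γ) g • μ γ x) ↔
      ∃ t : Γ → G, SatisfiesConditions ρ H t) ∧
    ∀ t : Γ → G, SatisfiesConditions ρ H t →
      ∃ μ : Γ →* Equiv.Perm (G ⧸ H),
        (∀ (γ : Γ) (g : G) (x : G ⧸ H), μ γ (g • x) = (ρ γ) g • μ γ x) ∧
        ∀ (γ : Γ) (g : G),
          μ γ (QuotientGroup.mk g) = QuotientGroup.mk ((ρ γ) g * t γ) := by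
  simpa only [satisfiesConditions_iff_isDescentDatum] using stmt2_general ρ H
end

section
/- Let c : Γ → G be a map such that ρ_c := (γ ↦ inn_{c_γ} ∘ ρ_γ) is a group homomorphism Γ → Aut(G), suppose t : Γ → G satisfies conditions (i)–(ii) for (ρ, H), and assume Z(G) ⊆ H. Then the map s : Γ → G defined by s_γ := c_γ t_γ satisfies conditions (i)–(ii) for (ρ_c, H). -/
/-!
Composing with inner automorphisms gives `ρ_c γ₁ * ρ_c γ₂ = inn (c γ₁ * ρ γ₁ (c γ₂)) * ρ (γ₁ * γ₂)`,
so `ρ_c` is multiplicative exactly when `c` is a cocycle for `ρ` up to `ker inn = Z(G)`. Since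
`Z(G)` is normal and contained in `H`, this defect does not affect cosets of `H`, and condition (ii)
for `c * t` reduces to condition (ii) for `t`.
-/

section Group

variable {G : Type*} [Group G]

theorem mulAut_mul_conj (φ : MulAut G) (g : G) :
    φ * MulAut.conj g = MulAut.conj (φ g) * φ := by
  ext x
  simp only [MulAut.mul_apply, MulAut.conj_apply, map_mul, map_inv]

theorem conj_mul_mul_conj_mul (φ ψ : MulAut G) (x y : G) :
    MulAut.conj x * φ * (MulAut.conj y * ψ) = MulAut.conj (x * φ y) * (φ * ψ) := by
  rw [mul_assoc, ← mul_assoc φ, mulAut_mul_conj, map_mul]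
  simp only [mul_assoc]

theorem conj_mul_apply_mul_mul (φ : MulAut G) (x y u v : G) :
    (MulAut.conj x * φ) (y * u) * (x * v) = x * φ y * (φ u * v) := by
  simp only [MulAut.mul_apply, MulAut.conj_apply, map_mul]
  group

theorem ker_mulAut_conj : (MulAut.conj : G →* MulAut G).ker = Subgroup.center G := by
  ext g
  simp only [MonoidHom.mem_ker, MulEquiv.ext_iff, MulAut.conj_apply, MulAut.one_apply,
    mul_inv_eq_iff_eq_mul, Subgroup.mem_center_iff]
  exact forall_congr' fun _ => eq_comm

theorem conj_eq_conj_iff_inv_mul_mem_center {g h : G} :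
    MulAut.conj g = MulAut.conj h ↔ h⁻¹ * g ∈ Subgroup.center G := by
  rw [MonoidHom.eq_iff, ker_mulAut_conj]

theorem map_mulAut_mul (H : Subgroup G) (φ ψ : MulAut G) :
    H.map (φ * ψ).toMonoidHom = (H.map ψ.toMonoidHom).map φ.toMonoidHom :=
  (H.map_map φ.toMonoidHom ψ.toMonoidHom).symm

theorem map_conj_mul_eq_map_conj_mul {H : Subgroup G} {φ : MulAut G} {t : G}
    (h : H.map φ.toMonoidHom = H.map (MulAut.conj t).toMonoidHom) (c : G) :
    H.map (MulAut.conj c * φ).toMonoidHom = H.map (MulAut.conj (c * t)).toMonoidHom := by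
  rw [map_mul, map_mulAut_mul, map_mulAut_mul, h]

theorem mul_inv_mul_mul_mem_of_normal_le {N H : Subgroup G} [hN : N.Normal] (hNH : N ≤ H)
    {a b p q : G} (hab : a⁻¹ * b ∈ N) (hpq : p⁻¹ * q ∈ H) : (a * p)⁻¹ * (b * q) ∈ H := by
  have hconj : p⁻¹ * (a⁻¹ * b) * p ∈ H := hNH (hN.conj_mem' _ hab p)
  have hsplit : (a * p)⁻¹ * (b * q) = p⁻¹ * (a⁻¹ * b) * p * (p⁻¹ * q) := by group
  rw [hsplit]
  exact H.mul_mem hconj hpq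

end Group

theorem inv_mul_mem_center_of_eq_conj_mul {Γ G : Type*} [MulOneClass Γ] [Group G]
    {ρ ρc : Γ →* MulAut G} {c : Γ → G} (hρc : ∀ γ, ρc γ = MulAut.conj (c γ) * ρ γ) (γ₁ γ₂ : Γ) :
    (c γ₁ * ρ γ₁ (c γ₂))⁻¹ * c (γ₁ * γ₂) ∈ Subgroup.center G := by
  rw [← conj_eq_conj_iff_inv_mul_mem_center]
  apply mul_right_cancel (b := ρ (γ₁ * γ₂))
  calc MulAut.conj (c (γ₁ * γ₂)) * ρ (γ₁ * γ₂)
      = ρc γ₁ * ρc γ₂ := by rw [← hρc, map_mul]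
    _ = MulAut.conj (c γ₁ * ρ γ₁ (c γ₂)) * ρ (γ₁ * γ₂) := by
      rw [hρc, hρc, conj_mul_mul_conj_mul, map_mul ρ]

/-- Let `c : Γ → G` be such that `ρ_c : γ ↦ inn_{c γ} ∘ ρ γ` is a group
homomorphism `Γ → Aut G`, suppose `t : Γ → G` satisfies conditions (i)–(ii) for `(ρ, H)`,
and assume `Z(G) ⊆ H`.  Then `s γ := c γ * t γ` satisfies conditions (i)–(ii) for
`(ρ_c, H)`. -/
theorem stmt6 {Γ G : Type*} [Group Γ] [Group G] (ρ : Γ →* MulAut G) (H : Subgroup G)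
    (hZ : Subgroup.center G ≤ H)
    (c : Γ → G) (ρc : Γ →* MulAut G)
    (hρc : ∀ γ : Γ, ρc γ = MulAut.conj (c γ) * ρ γ)
    (t : Γ → G) (ht : SatisfiesConditions ρ H t) :
    SatisfiesConditions ρc H (fun γ => c γ * t γ) := by
  obtain ⟨hmap, hmul⟩ := ht
  refine ⟨fun γ => ?_, fun γ₁ γ₂ => ?_⟩
  · rw [hρc]
    exact map_conj_mul_eq_map_conj_mul (hmap γ) (c γ)
  · rw [hρc, conj_mul_apply_mul_mul]
    have hdefect := inv_mul_mem_center_of_eq_conj_mul hρc γ₁ γ₂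
    exact mul_inv_mul_mul_mem_of_normal_le hZ hdefect (hmul γ₁ γ₂)
end

section
/- Let n ≥ 3 be odd, let Q = N_{SL₂(ℂ)}(A_n)/A_n = D_∞/A_n, and let θ be the involutive automorphism of Q induced by σ_c (i.e. θ(g·A_n) = σ_c(g)·A_n). Then the θ-cocycles in Q are exactly the classes of the matrices diag(t, t⁻¹) with t ∈ ℝ*; such a cocycle is equivalent to the class of I₂ if t > 0 and to the class of −I₂ if t < 0, and these two classes are inequivalent. In particular the cohomology set H¹(ℤ/2ℤ, Q) has exactly two elements. -/
noncomputable section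

open Matrix

/-- `SL(2,ℂ)`, the group of 2×2 complex matrices of determinant 1. -/
abbrev SL2C : Type := Matrix.SpecialLinearGroup (Fin 2) ℂ

/-- `ζ n = exp(2πi/n)`, a primitive `n`-th root of unity. -/
def ζc (n : ℕ) : ℂ := Complex.exp (2 * Real.pi * Complex.I / (n : ℂ))

lemma ζc_ne_zero (n : ℕ) : ζc n ≠ 0 := Complex.exp_ne_zero _

/-- `ω n = diag(ζ n, (ζ n)⁻¹)` as an element of `SL(2,ℂ)`. -/
def ωsl (n : ℕ) : SL2C :=
  ⟨!![ζc n, 0; 0, (ζc n)⁻¹], by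
    rw [Matrix.det_fin_two_of]
    simp [mul_inv_cancel₀ (ζc_ne_zero n)]⟩

/-- `-I₂` as an element of `SL(2,ℂ)`. -/
def mIsl : SL2C :=
  ⟨!![-1, 0; 0, -1], by rw [Matrix.det_fin_two_of]; norm_num⟩

/-- The compact real structure `σ_c` on `SL(2,ℂ)`: `g ↦ (g*)⁻¹`, the inverse of the
conjugate transpose. -/
def σc (g : SL2C) : SL2C :=
  (⟨(g : Matrix (Fin 2) (Fin 2) ℂ)ᴴ, by
    rw [Matrix.det_conjTranspose, Matrix.SpecialLinearGroup.det_coe, star_one]⟩ : SL2C)⁻¹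

/-- The cyclic subgroup `A_n = ⟨ω n⟩` of `SL(2,ℂ)`, of order `n`. -/
def Asub (n : ℕ) : Subgroup SL2C := Subgroup.closure {ωsl n}

/-- The subgroup `D_∞` of monomial (diagonal or antidiagonal) matrices in `SL(2,ℂ)`. -/
def Dinf : Subgroup SL2C where
  carrier := {g | ((g : Matrix (Fin 2) (Fin 2) ℂ) 0 1 = 0 ∧
      (g : Matrix (Fin 2) (Fin 2) ℂ) 1 0 = 0) ∨
    ((g : Matrix (Fin 2) (Fin 2) ℂ) 0 0 = 0 ∧
      (g : Matrix (Fin 2) (Fin 2) ℂ) 1 1 = 0)}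
  one_mem' := by
    left
    constructor <;> simp [Matrix.SpecialLinearGroup.coe_one, Matrix.one_apply]
  mul_mem' := by
    rintro a b (⟨ha1, ha2⟩ | ⟨ha1, ha2⟩) (⟨hb1, hb2⟩ | ⟨hb1, hb2⟩)
    · left
      constructor <;>
        simp [Matrix.SpecialLinearGroup.coe_mul, Matrix.mul_apply, Fin.sum_univ_two,
          ha1, ha2, hb1, hb2]
    · right
      constructor <;>
        simp [Matrix.SpecialLinearGroup.coe_mul, Matrix.mul_apply, Fin.sum_univ_two,
          ha1, ha2, hb1, hb2]
    · right
      constructor <;>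
        simp [Matrix.SpecialLinearGroup.coe_mul, Matrix.mul_apply, Fin.sum_univ_two,
          ha1, ha2, hb1, hb2]
    · left
      constructor <;>
        simp [Matrix.SpecialLinearGroup.coe_mul, Matrix.mul_apply, Fin.sum_univ_two,
          ha1, ha2, hb1, hb2]
  inv_mem' := by
    rintro a (⟨h1, h2⟩ | ⟨h1, h2⟩)
    · left
      constructor <;>
        simp [Matrix.SpecialLinearGroup.coe_inv, Matrix.adjugate_fin_two, h1, h2]
    · right
      constructor <;>
        simp [Matrix.SpecialLinearGroup.coe_inv, Matrix.adjugate_fin_two, h1, h2]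

/-!
Through `u ↦ diag(u, u⁻¹)`, the group `A_n` consists of the `n`-th roots of unity and `σ_c` acts
by `u ↦ ū⁻¹`. Hence `diag(u, u⁻¹)` is a cocycle modulo `A_n` iff `uⁿ` is real, and since `n` is
odd this means `uⁿ = tⁿ` for some real `t`. Twisting by a real diagonal matrix multiplies `t` by
an arbitrary positive number, so only its sign can matter.

Everything else is excluded by a sign: the upper left entry of an element of `A_n` is an `n`-th
root of unity, so for odd `n` it is not a nonpositive real. For an antidiagonal `g` the upper left
entry of `g σ_c(g)` is `-|g₀₁|²`. If `I₂` and `-I₂` were equivalent through `b`, then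
`-(b⁻¹ σ_c(b))⁻¹ = -b* b` would lie in `A_n`, but its upper left entry is `-(|b₀₀|² + |b₁₀|²)`.
-/

lemma surjective_pow_of_odd {n : ℕ} (hodd : Odd n) : Function.Surjective fun x : ℝ ↦ x ^ n := by
  have htop : Filter.Tendsto (fun x : ℝ ↦ x ^ n) Filter.atTop Filter.atTop :=
    Filter.tendsto_pow_atTop hodd.pos.ne'
  have hbot : Filter.Tendsto (fun x : ℝ ↦ x ^ n) Filter.atBot Filter.atBot := by
    refine (Filter.tendsto_neg_atTop_atBot.comp
      (htop.comp Filter.tendsto_neg_atBot_atTop)).congr fun x ↦ ?_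
    simp only [Function.comp_apply, hodd.neg_pow, neg_neg]
  exact (continuous_pow n).surjective htop hbot

lemma isSelfAdjoint_pow_iff_exists_ofReal_pow_eq {n : ℕ} (hodd : Odd n) {z : ℂ} :
    IsSelfAdjoint (z ^ n) ↔ ∃ t : ℝ, (t : ℂ) ^ n = z ^ n := by
  constructor
  · intro hz
    obtain ⟨r, hr⟩ := Complex.conj_eq_iff_real.mp hz
    obtain ⟨t, rfl⟩ := surjective_pow_of_odd hodd r
    exact ⟨t, by rw [hr, Complex.ofReal_pow]⟩
  · rintro ⟨t, ht⟩
    rw [← ht]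
    exact IsSelfAdjoint.pow (Complex.conj_ofReal t) n

section Diagonal

variable {R : Type*} [CommRing R]

/-- The diagonal torus `u ↦ diag(u, u⁻¹)` of `SL₂(R)`, as a homomorphism from `Rˣ`, so that
products, inverses and powers of diagonal matrices are computed in the commutative group `Rˣ`. -/
def diagHom : Rˣ →* Matrix.SpecialLinearGroup (Fin 2) R where
  toFun u := ⟨!![(u : R), 0; 0, ↑u⁻¹], by simp [det_fin_two_of]⟩
  map_one' := by ext i j; fin_cases i <;> fin_cases j <;> simp
  map_mul' u v := Subtype.ext <| by
    change _ = !![(u : R), 0; 0, ↑u⁻¹] * !![(v : R), 0; 0, ↑v⁻¹]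
    simp [mul_comm]

lemma coe_diagHom (u : Rˣ) :
    (diagHom u : Matrix (Fin 2) (Fin 2) R) = !![(u : R), 0; 0, ↑u⁻¹] := rfl

lemma diagHom_injective : Function.Injective (diagHom (R := R)) := fun _ _ h ↦
  Units.ext (congrArg (fun g : Matrix.SpecialLinearGroup (Fin 2) R ↦ g 0 0) h)

lemma exists_diagHom_eq {g : Matrix.SpecialLinearGroup (Fin 2) R}
    (h01 : g 0 1 = 0) (h10 : g 1 0 = 0) : ∃ u : Rˣ, diagHom u = g := by
  have hdet : g 0 0 * g 1 1 = 1 := by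
    have := g.det_coe
    rwa [det_fin_two, h01, zero_mul, sub_zero] at this
  refine ⟨⟨g 0 0, g 1 1, hdet, (mul_comm _ _).trans hdet⟩, ?_⟩
  ext i j
  fin_cases i <;> fin_cases j <;> simp [coe_diagHom, h01, h10]

end Diagonal

/-- The homomorphism `t ↦ diag(t, t⁻¹)` from `ℝ*` to `SL₂(ℂ)`, whose values represent the
cocycles. -/
def realDiag : ℝˣ →* SL2C := diagHom.comp (Units.map Complex.ofRealHom)

lemma coe_realDiag (t : ℝˣ) :
    (realDiag t : Matrix (Fin 2) (Fin 2) ℂ) = !![((t : ℝ) : ℂ), 0; 0, ((t : ℝ) : ℂ)⁻¹] := by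
  simp [realDiag, coe_diagHom]

lemma realDiag_mem_Dinf (t : ℝˣ) : realDiag t ∈ Dinf := Or.inl ⟨rfl, rfl⟩

lemma mIsl_eq_realDiag : mIsl = realDiag (-1) := by
  apply Subtype.ext
  simp [mIsl, coe_realDiag]

lemma Asub_eq_map_rootsOfUnity {n : ℕ} (hn : n ≠ 0) :
    Asub n = (rootsOfUnity n ℂ).map diagHom := by
  have : NeZero n := ⟨hn⟩
  let ζ : ℂˣ := Units.mk0 (ζc n) (ζc_ne_zero n)
  have hζ : IsPrimitiveRoot ζ n :=
    IsPrimitiveRoot.coe_units_iff.mp (Complex.isPrimitiveRoot_exp n hn)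
  have hω : ωsl n = diagHom ζ := by
    apply Subtype.ext
    simp [ωsl, coe_diagHom, ζ]
  rw [Asub, ← Subgroup.zpowers_eq_closure, hω, ← hζ.zpowers_eq, MonoidHom.map_zpowers]

lemma diagHom_mem_Asub_iff {n : ℕ} (hn : n ≠ 0) {u : ℂˣ} : diagHom u ∈ Asub n ↔ u ^ n = 1 := by
  rw [Asub_eq_map_rootsOfUnity hn, Subgroup.mem_map_iff_mem diagHom_injective, mem_rootsOfUnity]

lemma notMem_Asub_of_apply_zero_zero_nonpos {n : ℕ} (hodd : Odd n) {g : SL2C} {r : ℝ}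
    (hr : r ≤ 0) (hg : g 0 0 = r) : g ∉ Asub n := by
  rw [Asub_eq_map_rootsOfUnity hodd.pos.ne']
  rintro ⟨u, hu, rfl⟩
  have hroot : (r : ℂ) ^ n = 1 := by
    rw [← hg]
    exact (mem_rootsOfUnity' n u).mp hu
  have hpow : r ^ n = 1 := by exact_mod_cast hroot
  exact hr.not_gt (hodd.pow_pos_iff.mp (hpow ▸ one_pos))

lemma coe_σc (g : SL2C) :
    (σc g : Matrix (Fin 2) (Fin 2) ℂ) = !![star (g 1 1), -star (g 1 0);
      -star (g 0 1), star (g 0 0)] := by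
  change adjugate (g : Matrix (Fin 2) (Fin 2) ℂ)ᴴ = _
  simp [adjugate_fin_two]

lemma coe_inv_σc (g : SL2C) :
    ((σc g)⁻¹ : SL2C) = (g : Matrix (Fin 2) (Fin 2) ℂ)ᴴ :=
  congrArg Subtype.val (_root_.inv_inv (_ : SL2C))

lemma σc_diagHom (u : ℂˣ) : σc (diagHom u) = diagHom (star u)⁻¹ := by
  apply Subtype.ext
  simp [coe_σc, coe_diagHom]

lemma σc_realDiag (t : ℝˣ) : σc (realDiag t) = (realDiag t)⁻¹ := by
  let u : ℂˣ := Units.map Complex.ofRealHom t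
  have hstar : star u = u := Units.ext (Complex.conj_ofReal t)
  change σc (diagHom u) = (diagHom u)⁻¹
  rw [σc_diagHom, hstar, map_inv]

/-- `g` represents a `θ`-cocycle of `D_∞/A_n`, that is, `θ(gA_n) = (gA_n)⁻¹`. -/
def IsThetaCocycle (n : ℕ) (g : SL2C) : Prop := g * σc g ∈ Asub n

/-- `r` and `g` represent equivalent elements of `D_∞/A_n`: writing `q` for the class of some
`b ∈ D_∞`, one has `gA_n = q⁻¹ · rA_n · θ(q)`. -/
def IsThetaEquiv (n : ℕ) (r g : SL2C) : Prop := ∃ b ∈ Dinf, (b⁻¹ * r * σc b)⁻¹ * g ∈ Asub n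

lemma isThetaCocycle_diagHom_iff {n : ℕ} (hn : n ≠ 0) {u : ℂˣ} :
    IsThetaCocycle n (diagHom u) ↔ IsSelfAdjoint ((u : ℂ) ^ n) := by
  rw [IsThetaCocycle, σc_diagHom, ← map_mul, diagHom_mem_Asub_iff hn, mul_pow, inv_pow,
    mul_inv_eq_one, eq_comm, ← star_pow, Units.ext_iff, Units.coe_star, Units.val_pow_eq_pow_val,
    IsSelfAdjoint]

lemma diagHom_inv_mul_realDiag_mem_Asub_iff {n : ℕ} (hn : n ≠ 0) {u : ℂˣ} {t : ℝˣ} :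
    (diagHom u)⁻¹ * realDiag t ∈ Asub n ↔ ((t : ℝ) : ℂ) ^ n = (u : ℂ) ^ n := by
  rw [realDiag, MonoidHom.comp_apply, ← map_inv, ← map_mul, diagHom_mem_Asub_iff hn, mul_pow,
    inv_pow, inv_mul_eq_one, eq_comm, Units.ext_iff]
  rfl

lemma isThetaCocycle_diagHom_iff_exists_realDiag {n : ℕ} (hodd : Odd n) {u : ℂˣ} :
    IsThetaCocycle n (diagHom u) ↔ ∃ t : ℝˣ, (diagHom u)⁻¹ * realDiag t ∈ Asub n := by
  have hn : n ≠ 0 := hodd.pos.ne'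
  simp only [isThetaCocycle_diagHom_iff hn, isSelfAdjoint_pow_iff_exists_ofReal_pow_eq hodd,
    diagHom_inv_mul_realDiag_mem_Asub_iff hn]
  refine ⟨fun ⟨t, ht⟩ ↦ ?_, fun ⟨t, ht⟩ ↦ ⟨t, ht⟩⟩
  have ht0 : (t : ℂ) ≠ 0 := ne_zero_pow hn (ht ▸ pow_ne_zero n u.ne_zero)
  exact ⟨Units.mk0 t (Complex.ofReal_ne_zero.mp ht0), ht⟩

lemma not_isThetaCocycle_of_apply_zero_zero_eq_zero {n : ℕ} (hodd : Odd n) {g : SL2C}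
    (h00 : g 0 0 = 0) : ¬ IsThetaCocycle n g := by
  refine notMem_Asub_of_apply_zero_zero_nonpos hodd
    (neg_nonpos.mpr (Complex.normSq_nonneg (g 0 1))) ?_
  rw [Matrix.SpecialLinearGroup.coe_mul, coe_σc]
  simp [mul_apply, h00, Complex.mul_conj]

lemma isThetaCocycle_iff_exists_realDiag {n : ℕ} (hodd : Odd n) {g : SL2C} (hg : g ∈ Dinf) :
    IsThetaCocycle n g ↔ ∃ t : ℝˣ, g⁻¹ * realDiag t ∈ Asub n := by
  rcases hg with ⟨h01, h10⟩ | ⟨h00, h11⟩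
  · obtain ⟨u, rfl⟩ := exists_diagHom_eq h01 h10
    exact isThetaCocycle_diagHom_iff_exists_realDiag hodd
  · refine iff_of_false (not_isThetaCocycle_of_apply_zero_zero_eq_zero hodd h00) ?_
    rintro ⟨t, ht⟩
    have h : (g⁻¹ * realDiag t) 0 0 = ((0 : ℝ) : ℂ) := by
      rw [Matrix.SpecialLinearGroup.coe_mul, Matrix.SpecialLinearGroup.coe_inv,
        adjugate_fin_two, coe_realDiag]
      simp [h11]
    exact notMem_Asub_of_apply_zero_zero_nonpos hodd le_rfl h ht

lemma isThetaCocycle_realDiag (n : ℕ) (t : ℝˣ) : IsThetaCocycle n (realDiag t) := by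
  rw [IsThetaCocycle, σc_realDiag, mul_inv_cancel]
  exact one_mem _

lemma isThetaEquiv_realDiag_of_div_pos (n : ℕ) {c t : ℝˣ} (h : 0 < (t : ℝ) / c) :
    IsThetaEquiv n (realDiag c) (realDiag t) := by
  let s : ℝˣ := Units.mk0 √(t / c : ℝ) (Real.sqrt_ne_zero'.mpr h)
  have hs : s * c * s = t := by
    have hsq : s * s = t / c := by
      ext
      simpa [s] using Real.mul_self_sqrt h.le
    rw [mul_right_comm, hsq, div_mul_cancel]
  refine ⟨realDiag s⁻¹, realDiag_mem_Dinf _, ?_⟩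
  rw [σc_realDiag, map_inv, _root_.inv_inv, ← map_mul, ← map_mul, hs, inv_mul_cancel]
  exact one_mem _

lemma isThetaEquiv_one_realDiag (n : ℕ) {t : ℝˣ} (ht : 0 < (t : ℝ)) :
    IsThetaEquiv n 1 (realDiag t) := by
  rw [← map_one realDiag]
  exact isThetaEquiv_realDiag_of_div_pos n (by simpa using ht)

lemma isThetaEquiv_mIsl_realDiag (n : ℕ) {t : ℝˣ} (ht : (t : ℝ) < 0) :
    IsThetaEquiv n mIsl (realDiag t) := by
  rw [mIsl_eq_realDiag]
  exact isThetaEquiv_realDiag_of_div_pos n (by simpa [div_neg] using ht)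

lemma coe_inv_inv_mul_σc (b : SL2C) :
    ((b⁻¹ * σc b)⁻¹ : SL2C) = (b : Matrix (Fin 2) (Fin 2) ℂ)ᴴ * b := by
  rw [_root_.mul_inv_rev, _root_.inv_inv, Matrix.SpecialLinearGroup.coe_mul, coe_inv_σc]

lemma not_isThetaEquiv_one_mIsl {n : ℕ} (hodd : Odd n) : ¬ IsThetaEquiv n 1 mIsl := by
  rintro ⟨b, -, hb⟩
  refine notMem_Asub_of_apply_zero_zero_nonpos hodd
    (r := -(Complex.normSq (b 0 0) + Complex.normSq (b 1 0))) ?_ ?_ hb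
  · exact neg_nonpos.mpr (add_nonneg (Complex.normSq_nonneg _) (Complex.normSq_nonneg _))
  · rw [mul_one, Matrix.SpecialLinearGroup.coe_mul, coe_inv_inv_mul_σc]
    simp [mIsl, mul_apply, Complex.normSq_eq_conj_mul_self, add_comm]

/-- Let `n ≥ 3` be odd and let `Q = D_∞/A_n`, with the involution `θ`
induced by `σ_c`.  In terms of representatives: an element `g ∈ D_∞` represents a θ-cocycle
iff `g * σ_c(g) ∈ A_n`, and two classes are equivalent via `b ∈ D_∞` iff
`(b⁻¹ * r * σ_c(b))⁻¹ * g ∈ A_n`.  Then the θ-cocycles in `Q` are exactly the classes of the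
matrices `diag(t, t⁻¹)` with `t ∈ ℝ*`; such a cocycle is equivalent to the class of `I₂` if
`t > 0` and to the class of `-I₂` if `t < 0`, and these two classes are inequivalent
cocycles.  In particular `H¹(ℤ/2ℤ, Q)` has exactly two elements. -/
theorem stmt15 (n : ℕ) (h3 : 3 ≤ n) (hodd : Odd n) :
    (∀ g ∈ Dinf, (g * σc g ∈ Asub n ↔
      ∃ t : ℝ, t ≠ 0 ∧ ∃ d : SL2C,
        (d : Matrix (Fin 2) (Fin 2) ℂ) = !![(t : ℂ), 0; 0, (t : ℂ)⁻¹] ∧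
        g⁻¹ * d ∈ Asub n)) ∧
    (∀ t : ℝ, t ≠ 0 → ∀ d : SL2C,
      (d : Matrix (Fin 2) (Fin 2) ℂ) = !![(t : ℂ), 0; 0, (t : ℂ)⁻¹] →
      (0 < t → ∃ b ∈ Dinf, (b⁻¹ * 1 * σc b)⁻¹ * d ∈ Asub n) ∧
      (t < 0 → ∃ b ∈ Dinf, (b⁻¹ * mIsl * σc b)⁻¹ * d ∈ Asub n)) ∧
    ((1 : SL2C) * σc 1 ∈ Asub n ∧ mIsl * σc mIsl ∈ Asub n) ∧
    ¬∃ b ∈ Dinf, (b⁻¹ * 1 * σc b)⁻¹ * mIsl ∈ Asub n := by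
  refine ⟨fun g hg ↦ ?_, fun t ht d hd ↦ ?_,
    ⟨map_one realDiag ▸ isThetaCocycle_realDiag n 1,
      mIsl_eq_realDiag ▸ isThetaCocycle_realDiag n (-1)⟩,
    not_isThetaEquiv_one_mIsl hodd⟩
  · refine (isThetaCocycle_iff_exists_realDiag hodd hg).trans ⟨?_, ?_⟩
    · rintro ⟨t, hmem⟩
      exact ⟨t, t.ne_zero, realDiag t, coe_realDiag t, hmem⟩
    · rintro ⟨t, ht, d, hd, hmem⟩
      lift t to ℝˣ using ht.isUnit
      obtain rfl : d = realDiag t := Subtype.ext (hd.trans (coe_realDiag t).symm)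
      exact ⟨t, hmem⟩
  · lift t to ℝˣ using ht.isUnit
    obtain rfl : d = realDiag t := Subtype.ext (hd.trans (coe_realDiag t).symm)
    exact ⟨isThetaEquiv_one_realDiag n, isThetaEquiv_mIsl_realDiag n⟩
end
end
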